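/- Let m₀ > 0 and let M : [0, ∞) → ℝ be monotone nondecreasing with M(t) ≥ m₀ for all t ≥ 0. If F, G ∈ L^r(Ω, μ) are real-valued functions that are not equal μ-almost everywhere, then M(ρ(F))·a(F, F − G) − M(ρ(G))·a(G, F − G) > 0; that is, the Kirchhoff-weighted operator F ↦ M(ρ(F))·a(F, ·) is strictly monotone on L^r(Ω, μ). -/

import Mathlib

open MeasureTheory

/-- The modular `ρ(F) = ∫ |F|^r dμ`. -/
noncomputable def kirchhoffModular {Ω : Type*} [MeasurableSpace Ω]
    (μ : Measure Ω) (r : ℝ) (F : Ω → ℝ) : ℝ :=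
  ∫ ω, |F ω| ^ r ∂μ

/-- The pairing `a(F, G) = ∫ |F|^{r-2} F G dμ`, with `|F|^{r-2} F` interpreted as
`sign(F) |F|^{r-1}` (equal to `0` where `F = 0`). -/
noncomputable def kirchhoffPairing {Ω : Type*} [MeasurableSpace Ω]
    (μ : Measure Ω) (r : ℝ) (F G : Ω → ℝ) : ℝ :=
  ∫ ω, Real.sign (F ω) * |F ω| ^ (r - 1) * G ω ∂μ


lemma kphi_pos {r x : ℝ} (hx : 0 < x) : Real.sign x * |x| ^ (r - 1) = x ^ (r - 1) := by
  rw [Real.sign_of_pos hx, abs_of_pos hx, one_mul]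

lemma kphi_neg {r x : ℝ} (hx : x < 0) : Real.sign x * |x| ^ (r - 1) = -(-x) ^ (r - 1) := by
  rw [Real.sign_of_neg hx, abs_of_neg hx]; ring

lemma kphi_mono {r : ℝ} (hr : 1 < r) :
    StrictMono (fun x : ℝ => Real.sign x * |x| ^ (r - 1)) := by
  have h0 : 0 < r - 1 := by linarith
  intro x y hxy
  show Real.sign x * |x| ^ (r - 1) < Real.sign y * |y| ^ (r - 1)
  rcases lt_trichotomy x 0 with hx | hx | hx
  · have hxp : 0 < (-x) ^ (r - 1) := Real.rpow_pos_of_pos (by linarith) _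
    rw [kphi_neg hx]
    rcases lt_trichotomy y 0 with hy | hy | hy
    · rw [kphi_neg hy]
      have := Real.rpow_lt_rpow (x := -y) (y := -x) (by linarith) (by linarith) h0
      linarith
    · subst hy; simp only [Real.sign_zero, zero_mul]; linarith
    · rw [kphi_pos hy]
      have := Real.rpow_pos_of_pos hy (r - 1)
      linarith
  · subst hx
    rw [kphi_pos hxy]
    simp only [Real.sign_zero, zero_mul]
    exact Real.rpow_pos_of_pos hxy _
  · rw [kphi_pos hx, kphi_pos (hx.trans hxy)]
    exact Real.rpow_lt_rpow hx.le hxy h0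

lemma kphi_self {r : ℝ} (hr : 1 < r) (x : ℝ) :
    Real.sign x * |x| ^ (r - 1) * x = |x| ^ r := by
  rcases eq_or_ne x 0 with rfl | hx
  · simp [Real.zero_rpow (by linarith : r ≠ 0)]
  · have h1 : Real.sign x * x = |x| := by
      rcases lt_or_gt_of_ne hx with h | h
      · rw [Real.sign_of_neg h, abs_of_neg h]; ring
      · rw [Real.sign_of_pos h, abs_of_pos h]; ring
    have h2 : |x| ^ r = |x| ^ (r - 1) * |x| := by
      rw [← Real.rpow_add_one (abs_ne_zero.mpr hx)]; ring_nf
    rw [h2, ← h1]; ring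

lemma kphi_young {r : ℝ} (hr : 1 < r) (x y : ℝ) :
    |Real.sign x * |x| ^ (r - 1) * y| ≤ |y| ^ r / r + (1 - 1 / r) * |x| ^ r := by
  have hc := Real.HolderConjugate.conjExponent hr
  have hY := Real.young_inequality_of_nonneg (abs_nonneg y)
    (Real.rpow_nonneg (abs_nonneg x) (r - 1)) hc
  have hr1 : r - 1 ≠ 0 := by linarith
  have hr0 : r ≠ 0 := by linarith
  have e : (|x| ^ (r - 1)) ^ (r.conjExponent) = |x| ^ r := by
    rw [← Real.rpow_mul (abs_nonneg x), Real.conjExponent]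
    congr 1; field_simp
  rw [e] at hY
  have e2 : |x| ^ r / r.conjExponent = (1 - 1 / r) * |x| ^ r := by
    rw [Real.conjExponent]; field_simp
  rw [e2] at hY
  refine le_trans ?_ hY
  rw [abs_mul, abs_mul, abs_of_nonneg (Real.rpow_nonneg (abs_nonneg x) (r - 1)), mul_comm]
  refine mul_le_mul_of_nonneg_left ?_ (abs_nonneg y)
  have : |Real.sign x| ≤ 1 := by
    rcases Real.sign_apply_eq x with h | h | h <;> rw [h] <;> norm_num
  exact mul_le_of_le_one_left (Real.rpow_nonneg (abs_nonneg x) _) this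

lemma k_int_pow {Ω : Type*} [MeasurableSpace Ω] {μ : Measure Ω} {r : ℝ} (hr : 1 < r)
    {F : Ω → ℝ} (hF : MemLp F (ENNReal.ofReal r) μ) :
    Integrable (fun ω => |F ω| ^ r) μ := by
  have := hF.integrable_norm_rpow (by simp; linarith) (by simp)
  rwa [ENNReal.toReal_ofReal (by linarith)] at this

lemma k_int {Ω : Type*} [MeasurableSpace Ω] {μ : Measure Ω} {r : ℝ} (hr : 1 < r)
    {F H : Ω → ℝ} (hF : MemLp F (ENNReal.ofReal r) μ) (hH : MemLp H (ENNReal.ofReal r) μ) :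
    Integrable (fun ω => Real.sign (F ω) * |F ω| ^ (r - 1) * H ω) μ := by
  refine Integrable.mono' (((k_int_pow hr hH).div_const r).add
    ((k_int_pow hr hF).const_mul (1 - 1 / r))) ?_ ?_
  · have := (kphi_mono hr).monotone.measurable.comp_aemeasurable hF.1.aemeasurable
    exact (this.mul hH.1.aemeasurable).aestronglyMeasurable
  · exact Filter.Eventually.of_forall fun ω => kphi_young hr (F ω) (H ω)

lemma k_pair_sub {Ω : Type*} [MeasurableSpace Ω] {μ : Measure Ω} {r : ℝ} (hr : 1 < r)
    {F G : Ω → ℝ} (hF : MemLp F (ENNReal.ofReal r) μ) (hG : MemLp G (ENNReal.ofReal r) μ) :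
    (kirchhoffModular μ r F - kirchhoffModular μ r G) / r ≤ kirchhoffPairing μ r F (F - G) := by
  unfold kirchhoffModular kirchhoffPairing
  rw [← integral_sub (k_int_pow hr hF) (k_int_pow hr hG), ← integral_div]
  refine integral_mono (((k_int_pow hr hF).sub (k_int_pow hr hG)).div_const r)
    (k_int hr hF (hF.sub hG)) fun ω => ?_
  have h1 := (le_abs_self _).trans (kphi_young hr (F ω) (G ω))
  have h2 := kphi_self hr (F ω)
  simp only [Pi.sub_apply]
  rw [mul_sub, h2, sub_div]
  have : (1 - 1 / r) * |F ω| ^ r = |F ω| ^ r - |F ω| ^ r / r := by ring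
  linarith

lemma k_pair_neg {Ω : Type*} [MeasurableSpace Ω] {μ : Measure Ω} {r : ℝ} (F G : Ω → ℝ) :
    kirchhoffPairing μ r G (F - G) = - kirchhoffPairing μ r G (G - F) := by
  unfold kirchhoffPairing
  rw [← integral_neg]
  congr 1; ext ω; simp only [Pi.sub_apply]; ring

lemma k_strict {Ω : Type*} [MeasurableSpace Ω] {μ : Measure Ω} {r : ℝ} (hr : 1 < r)
    {F G : Ω → ℝ} (hF : MemLp F (ENNReal.ofReal r) μ) (hG : MemLp G (ENNReal.ofReal r) μ)
    (hFG : ¬ F =ᵐ[μ] G) :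
    0 < kirchhoffPairing μ r F (F - G) - kirchhoffPairing μ r G (F - G) := by
  unfold kirchhoffPairing
  have i1 := k_int hr hF (hF.sub hG)
  have i2 := k_int hr hG (hF.sub hG)
  have key : ∀ x y : ℝ, 0 ≤ Real.sign x * |x| ^ (r - 1) * (x - y)
      - Real.sign y * |y| ^ (r - 1) * (x - y) ∧
      (Real.sign x * |x| ^ (r - 1) * (x - y)
      - Real.sign y * |y| ^ (r - 1) * (x - y) = 0 → x = y) := by
    intro x y
    rw [← sub_mul]
    rcases lt_trichotomy x y with h | h | h
    · have h' : Real.sign x * |x| ^ (r - 1) < Real.sign y * |y| ^ (r - 1) := kphi_mono hr h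
      have := mul_pos_of_neg_of_neg (sub_neg.mpr h') (sub_neg.mpr h)
      exact ⟨this.le, fun h0 => absurd h0 this.ne'⟩
    · subst h; simp
    · have h' : Real.sign y * |y| ^ (r - 1) < Real.sign x * |x| ^ (r - 1) := kphi_mono hr h
      have := mul_pos (sub_pos.mpr h') (sub_pos.mpr h)
      exact ⟨this.le, fun h0 => absurd h0 this.ne'⟩
  rw [← integral_sub i1 i2]
  refine lt_of_le_of_ne (integral_nonneg fun ω => (key (F ω) (G ω)).1) fun h => hFG ?_
  have := (integral_eq_zero_iff_of_nonneg (fun ω => (key (F ω) (G ω)).1) (i1.sub i2)).mp h.symm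
  filter_upwards [this] with ω hω
  exact (key (F ω) (G ω)).2 hω

/-- **Strict monotonicity of the Kirchhoff-weighted operator.** If `M` is monotone
nondecreasing with `M(t) ≥ m₀ > 0` for all `t ≥ 0`, and `F, G ∈ L^r(Ω, μ)` are not equal
`μ`-a.e., then `M(ρ(F))·a(F, F − G) − M(ρ(G))·a(G, F − G) > 0`. -/
theorem kirchhoff_weighted_operator_strictly_monotone
    {Ω : Type*} [MeasurableSpace Ω] (μ : Measure Ω) (r : ℝ) (hr : 1 < r)
    (m₀ : ℝ) (hm₀ : 0 < m₀) (M : ℝ → ℝ) (hM : Monotone M)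
    (hMm₀ : ∀ t : ℝ, 0 ≤ t → m₀ ≤ M t) (F G : Ω → ℝ)
    (hF : MemLp F (ENNReal.ofReal r) μ) (hG : MemLp G (ENNReal.ofReal r) μ)
    (hFG : ¬ F =ᵐ[μ] G) :
    0 < M (kirchhoffModular μ r F) * kirchhoffPairing μ r F (F - G) -
        M (kirchhoffModular μ r G) * kirchhoffPairing μ r G (F - G) := by
  have hD := k_strict hr hF hG hFG
  have h1 := k_pair_sub hr hF hG
  have h2 := k_pair_sub hr hG hF
  have h3 := k_pair_neg (μ := μ) (r := r) F G
  have hnn : ∀ H : Ω → ℝ, 0 < M (kirchhoffModular μ r H) := fun H =>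
    hm₀.trans_le (hMm₀ _ (integral_nonneg fun ω => Real.rpow_nonneg (abs_nonneg _) _))
  have hMF := hnn F
  have hMG := hnn G
  have hr0 : 0 ≤ r := by linarith
  rcases le_total (kirchhoffModular μ r G) (kirchhoffModular μ r F) with h | h
  · have ha := (div_nonneg (sub_nonneg.mpr h) hr0).trans h1
    have := mul_nonneg (sub_nonneg.mpr (hM h)) ha
    have := mul_pos hMG hD
    linarith
  · have ha := (div_nonneg (sub_nonneg.mpr h) hr0).trans h2
    have := mul_nonneg (sub_nonneg.mpr (hM h)) ha
    have := mul_pos hMF hD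
    rw [h3] at *
    linarith
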